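/- arXiv:1709.07032 — 4 statements merged into one kernel-verified Lean document; each statement's English description precedes it below -/
import Mathlib

section
/- For every customer demand λ : N × N × {1,…,T} → ℕ, the offline optimal rebalancing problem admits a feasible solution; that is, there exist passenger flows x^p, rebalancing flows x^r, and initial vehicle placements s (all ℕ-valued) satisfying the demand-satisfaction constraint, the vehicle flow-conservation constraint, and the constraint that initial vehicles are only inserted at the first time interval. -/
/-!
Offline optimal rebalancing problem (time-expanded network).
Time is modeled by natural numbers restricted to `Finset.Icc 1 T`.
Inflow terms whose departure time `t - τ j i` would be `< 1` are taken to be `0`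
(since `τ j i ≥ 1`, this is exactly when `¬ (τ j i < t)`).
The vehicle-conservation equation `Σ out − Σ in = s i t` is stated equivalently in ℕ
as `Σ out = s i t + Σ in`.
-/

/-- Feasibility for the offline optimal rebalancing problem:
(i) demand satisfaction, (ii) vehicle flow conservation,
(iii) initial vehicles only at the first time interval. -/
def IsFeasible {N : Type*} [Fintype N] (T : ℕ) (τ : N → N → ℕ)
    (lam : N → N → ℕ → ℕ) (xp xr : N → N → ℕ → ℕ) (s : N → ℕ → ℕ) : Prop :=
  (∀ i j t, t ∈ Finset.Icc 1 T → xp i j t = lam i j t) ∧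
  (∀ i t, t ∈ Finset.Icc 1 T →
    (∑ j, (xp i j t + xr i j t)) =
      s i t + ∑ j, (if τ j i < t then xp j i (t - τ j i) + xr j i (t - τ j i) else 0)) ∧
  (∀ i t, 1 < t → s i t = 0)

/-- **Feasibility of the offline optimal rebalancing problem.**
For every customer demand `lam`, there exist passenger flows, rebalancing flows, and
initial vehicle placements forming a feasible solution. -/
theorem offline_rebalancing_feasible
    {N : Type*} [Fintype N] [Nonempty N] (T : ℕ) (τ : N → N → ℕ)
    (hτ : ∀ i j, 1 ≤ τ i j) (hτdiag : ∀ i, τ i i = 1)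
    (lam : N → N → ℕ → ℕ) :
    ∃ (xp xr : N → N → ℕ → ℕ) (s : N → ℕ → ℕ),
      IsFeasible T τ lam xp xr s := by
  classical
  set D : N → ℕ → ℕ := fun i t => ∑ j, lam i j t with hD
  set A : N → ℕ → ℕ := fun i t => ∑ j, (if τ j i < t then lam j i (t - τ j i) else 0) with hA
  set W : N → ℕ → ℕ := fun i t =>
    ∑ u ∈ Finset.Ico (t + 1) (T + 1), D i u + ∑ u ∈ Finset.range (t + 1), A i u with hW
  refine ⟨lam, fun i j t => if i = j then W i t else 0,
    fun i t => if t = 1 then D i 1 + W i 1 else 0, fun _ _ _ _ => rfl, ?_, ?_⟩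
  · intro i t ht
    rw [Finset.mem_Icc] at ht
    have hout : (∑ j, (lam i j t + if i = j then W i t else 0)) = D i t + W i t := by
      rw [Finset.sum_add_distrib, Finset.sum_ite_eq]
      simp [hD]
    have hin : (∑ j, (if τ j i < t then
        lam j i (t - τ j i) + (if j = i then W j (t - τ j i) else 0) else 0)) =
        A i t + if 1 < t then W i (t - 1) else 0 := by
      have h1 : ∀ j, (if τ j i < t then
          lam j i (t - τ j i) + (if j = i then W j (t - τ j i) else 0) else 0) =
          (if τ j i < t then lam j i (t - τ j i) else 0) +
          (if j = i then (if 1 < t then W i (t - 1) else 0) else 0) := by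
        intro j
        by_cases hj : j = i
        · subst hj
          rw [hτdiag]
          split_ifs <;> simp
        · simp [hj]
      rw [Finset.sum_congr rfl (fun j _ => h1 j), Finset.sum_add_distrib, Finset.sum_ite_eq']
      simp [hA]
    change (∑ j, (lam i j t + if i = j then W i t else 0)) =
      (if t = 1 then D i 1 + W i 1 else 0) + (∑ j, (if τ j i < t then
        lam j i (t - τ j i) + (if j = i then W j (t - τ j i) else 0) else 0))
    rw [hout, hin]
    by_cases h : t = 1
    · subst h
      have hA1 : A i 1 = 0 := by
        simp only [hA]
        refine Finset.sum_eq_zero fun j _ => ?_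
        have := hτ j i
        rw [if_neg (by omega)]
      simp [hA1]
    · obtain ⟨k, rfl⟩ : ∃ k, t = k + 1 := ⟨t - 1, by omega⟩
      rw [if_neg h, if_pos (by omega), Nat.add_sub_cancel]
      have e1 := Finset.sum_eq_sum_Ico_succ_bot (show k + 1 < T + 1 by omega) (D i)
      have e2 := Finset.sum_range_succ (A i) (k + 1)
      simp only [hW]
      rw [e1, e2]
      ring
  · intro i t ht
    exact if_neg (by omega)
end

section
/- Every extreme point of the LP relaxation polytope of the offline optimal rebalancing problem is integer-valued: if (x^p, x^r, s), with real nonnegative entries, is an extreme point of the convex set of real-valued solutions satisfying the demand-satisfaction constraint, the vehicle flow-conservation constraint, and the constraint that initial vehicles are only inserted at the first time interval, then every coordinate of x^p, x^r, and s is a natural number. -/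
/-- The LP-relaxation feasible set of the offline optimal rebalancing problem,
viewed inside the real vector space of triples `(x^p, x^r, s)`.
Coordinates are indexed by `N × N × {1,…,T}` (resp. `N × {1,…,T}`); since we use
total functions on `ℕ` for time, all coordinates outside `Finset.Icc 1 T` are
constrained to vanish, so the set is (affinely isomorphic to) the finite-dimensional
polytope of the paper. The constraints are: nonnegativity, demand satisfaction
`x^p i j t = λ i j t`, vehicle flow conservation
`Σ_j out − Σ_j in = s i t` (inflow terms whose departure time would be `< 1` are `0`),
and `s i t = 0` for `t > 1`. -/
def LPFeasibleSet {N : Type*} [Fintype N] (T : ℕ) (τ : N → N → ℕ)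
    (lam : N → N → ℕ → ℕ) :
    Set ((N → N → ℕ → ℝ) × (N → N → ℕ → ℝ) × (N → ℕ → ℝ)) :=
  {p | (∀ i j t, 0 ≤ p.1 i j t) ∧ (∀ i j t, 0 ≤ p.2.1 i j t) ∧ (∀ i t, 0 ≤ p.2.2 i t) ∧
    (∀ i j t, t ∉ Finset.Icc 1 T → p.1 i j t = 0 ∧ p.2.1 i j t = 0) ∧
    (∀ i t, t ∉ Finset.Icc 1 T → p.2.2 i t = 0) ∧
    (∀ i j t, t ∈ Finset.Icc 1 T → p.1 i j t = (lam i j t : ℝ)) ∧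
    (∀ i t, t ∈ Finset.Icc 1 T →
      (∑ j, (p.1 i j t + p.2.1 i j t)) -
        (∑ j, (if τ j i < t then p.1 j i (t - τ j i) + p.2.1 j i (t - τ j i) else 0))
        = p.2.2 i t) ∧
    (∀ i t, 1 < t → p.2.2 i t = 0)}

/-- In a finite directed multigraph all of whose arcs carry a non-integral flow value and whose
net flow is integral at all vertices except possibly one, there is a nonzero circulation. -/
lemma exists_circulation_aux {E V : Type*} [Fintype E] [Nonempty E] [DecidableEq V]
    (src tgt : E → V) (star : V) (x : E → ℝ)
    (hx : ∀ e, ∀ n : ℤ, x e ≠ n)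
    (hnetint : ∀ v, v ≠ star → ∃ n : ℤ,
      ∑ e, ((if src e = v then x e else 0) - (if tgt e = v then x e else 0)) = n) :
    ∃ d : E → ℝ, d ≠ 0 ∧
      ∀ v, ∑ e, ((if src e = v then d e else 0) - (if tgt e = v then d e else 0)) = 0 := by
  classical
  set W : Finset V := Finset.univ.image src ∪ Finset.univ.image tgt with hW
  have hsW : ∀ e, src e ∈ W := fun e => by simp [hW]
  have htW : ∀ e, tgt e ∈ W := fun e => by simp [hW]
  have hsum : ∀ y : E → ℝ, ∑ v ∈ W,
      ∑ e, ((if src e = v then y e else 0) - (if tgt e = v then y e else 0)) = 0 := by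
    intro y
    rw [Finset.sum_comm]
    apply Finset.sum_eq_zero
    intro e _
    rw [Finset.sum_sub_distrib, Finset.sum_ite_eq, Finset.sum_ite_eq]
    simp [hsW e, htW e]
  have hnetint' : ∀ v ∈ W, ∃ n : ℤ,
      ∑ e, ((if src e = v then x e else 0) - (if tgt e = v then x e else 0)) = n := by
    intro v hv
    by_cases h : v = star
    · subst h
      have h1 := hsum x
      rw [← Finset.add_sum_erase _ _ hv] at h1
      have h2 : ∃ n : ℤ, ∑ w ∈ W.erase v,
          ∑ e, ((if src e = w then x e else 0) - (if tgt e = w then x e else 0)) = n := by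
        choose f hf using hnetint
        refine ⟨∑ w ∈ (W.erase v).attach, f w.1 (Finset.ne_of_mem_erase w.2), ?_⟩
        rw [← Finset.sum_attach]
        push_cast
        exact Finset.sum_congr rfl fun w _ => hf _ _
      obtain ⟨n, hn⟩ := h2
      refine ⟨-n, ?_⟩
      push_cast
      linarith
    · exact hnetint v h
  -- degree count
  have hdeg : ∀ v ∈ W, 2 ≤ ∑ e, ((if src e = v then 1 else 0) + (if tgt e = v then 1 else 0)) := by
    intro v hv
    obtain ⟨n, hn⟩ := hnetint' v hv
    have key : ∃ e, src e = v ∨ tgt e = v := by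
      simp only [hW, Finset.mem_union, Finset.mem_image, Finset.mem_univ, true_and] at hv
      rcases hv with ⟨e, he⟩ | ⟨e, he⟩
      · exact ⟨e, Or.inl he⟩
      · exact ⟨e, Or.inr he⟩
    obtain ⟨e, he⟩ := key
    by_contra hlt
    push Not at hlt
    rw [← Finset.add_sum_erase _ _ (Finset.mem_univ e)] at hlt
    have hz : ∑ e' ∈ Finset.univ.erase e,
        ((if src e' = v then 1 else 0) + (if tgt e' = v then 1 else 0)) = 0 := by
      rcases he with he | he <;> simp only [he, if_true] at hlt <;> omega
    have hz' := Finset.sum_eq_zero_iff.mp hz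
    have hne : ∀ e' ∈ Finset.univ.erase e, src e' ≠ v ∧ tgt e' ≠ v := by
      intro e' he'
      have := hz' e' he'
      constructor <;> intro h <;> simp [h] at this
    rw [← Finset.add_sum_erase _ _ (Finset.mem_univ e),
      Finset.sum_eq_zero (s := Finset.univ.erase e)] at hn
    · rw [hz] at hlt
      by_cases h1 : src e = v <;> by_cases h2 : tgt e = v
      · simp [h1, h2] at hlt
      · simp only [h1, h2, if_true, if_false] at hn
        exact hx e n (by linarith)
      · simp only [h1, h2, if_true, if_false] at hn
        exact hx e (-n) (by push_cast; linarith)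
      · tauto
    · intro e' he'
      simp [hne e' he']
  have hcard : W.card ≤ Fintype.card E := by
    have h1 : W.card * 2 ≤ ∑ v ∈ W,
        ∑ e, ((if src e = v then 1 else 0) + (if tgt e = v then 1 else 0)) := by
      rw [← smul_eq_mul]
      exact Finset.card_nsmul_le_sum _ _ _ hdeg
    rw [Finset.sum_comm] at h1
    have h2 : ∀ e : E, ∑ v ∈ W, ((if src e = v then 1 else 0) + (if tgt e = v then 1 else 0)) = 2 := by
      intro e
      rw [Finset.sum_add_distrib, Finset.sum_ite_eq, Finset.sum_ite_eq]
      simp [hsW e, htW e]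
    simp only [h2, Finset.sum_const, Finset.card_univ, smul_eq_mul] at h1
    omega
  let A : (E → ℝ) →ₗ[ℝ] (W → ℝ) :=
    { toFun := fun y v =>
        ∑ e, ((if src e = v.1 then y e else 0) - (if tgt e = v.1 then y e else 0))
      map_add' := by
        intro y z
        funext v
        simp only [Pi.add_apply]
        rw [← Finset.sum_add_distrib]
        refine Finset.sum_congr rfl fun e _ => ?_
        split_ifs <;> ring
      map_smul' := by
        intro c y
        funext v
        simp only [Pi.smul_apply, smul_eq_mul, RingHom.id_apply]
        rw [Finset.mul_sum]
        refine Finset.sum_congr rfl fun e _ => ?_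
        split_ifs <;> ring }
  have hAdef : ∀ y v, A y v =
    ∑ e, ((if src e = v.1 then y e else 0) - (if tgt e = v.1 then y e else 0)) := fun _ _ => rfl
  have hninj : ¬ Function.Injective A := by
    intro hinj
    have hle := LinearMap.finrank_le_finrank_of_injective hinj
    simp only [Module.finrank_fintype_fun_eq_card, Fintype.card_coe] at hle
    have hsurj : Function.Surjective A :=
      (LinearMap.injective_iff_surjective_of_finrank_eq_finrank (by
        simp only [Module.finrank_fintype_fun_eq_card, Fintype.card_coe]; omega)).mp hinj
    obtain ⟨y, hy⟩ := hsurj (fun _ => 1)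
    have h1 := hsum y
    rw [← Finset.sum_coe_sort] at h1
    have h2 : ∑ v : W, A y v = 0 := h1
    rw [hy] at h2
    simp only [Finset.sum_const, Finset.card_univ, Fintype.card_coe, nsmul_eq_mul, mul_one,
      Nat.cast_eq_zero, Finset.card_eq_zero] at h2
    obtain ⟨e⟩ := ‹Nonempty E›
    have := hsW e
    rw [h2] at this
    simp at this
  rw [← LinearMap.ker_eq_bot, Submodule.eq_bot_iff] at hninj
  push Not at hninj
  obtain ⟨d, hd, hd0⟩ := hninj
  refine ⟨d, hd0, fun v => ?_⟩
  by_cases hv : v ∈ W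
  · have := congrFun (LinearMap.mem_ker.mp hd) ⟨v, hv⟩
    rw [hAdef] at this
    simpa using this
  · apply Finset.sum_eq_zero
    intro e _
    have h1 : src e ≠ v := fun h => hv (h ▸ hsW e)
    have h2 : tgt e ≠ v := fun h => hv (h ▸ htW e)
    simp [h1, h2]

/-- Finset version: the circulation lives on the arcs with non-integral value. -/
lemma exists_circulation {E V : Type*} [DecidableEq V]
    (S : Finset E) (src tgt : E → V) (star : V) (x : E → ℝ)
    (hnetint : ∀ v, v ≠ star → ∃ n : ℤ,
      ∑ e ∈ S, ((if src e = v then x e else 0) - (if tgt e = v then x e else 0)) = n)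
    (hex : ∃ e ∈ S, ∀ n : ℤ, x e ≠ n) :
    ∃ d : E → ℝ, (∃ e, d e ≠ 0) ∧ (∀ e, d e ≠ 0 → e ∈ S ∧ ∀ n : ℤ, x e ≠ n) ∧
      ∀ v, ∑ e ∈ S, ((if src e = v then d e else 0) - (if tgt e = v then d e else 0)) = 0 := by
  classical
  set F : Finset E := S.filter (fun e => ∀ n : ℤ, x e ≠ n) with hF
  have hmem : ∀ e, e ∈ F ↔ e ∈ S ∧ ∀ n : ℤ, x e ≠ n := by intro e; simp [hF]
  obtain ⟨e0, he0, he0'⟩ := hex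
  have : Nonempty F := ⟨⟨e0, (hmem e0).2 ⟨he0, he0'⟩⟩⟩
  obtain ⟨d, hd0, hd⟩ := exists_circulation_aux (E := F) (fun e => src e.1) (fun e => tgt e.1) star
    (fun e => x e.1) (fun e => ((hmem e.1).1 e.2).2) (by
      intro v hv
      obtain ⟨n, hn⟩ := hnetint v hv
      rw [Finset.sum_coe_sort F
        (fun e => ((if src e = v then x e else 0) - (if tgt e = v then x e else 0)))]
      rw [← Finset.sum_filter_add_sum_filter_not S (fun e => ∀ n : ℤ, x e ≠ n), ← hF] at hn
      have h2 : ∃ m : ℤ, ∑ e ∈ S.filter (fun e => ¬ ∀ n : ℤ, x e ≠ n),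
          ((if src e = v then x e else 0) - (if tgt e = v then x e else 0)) = m := by
        refine ⟨∑ e ∈ S.filter (fun e => ¬ ∀ n : ℤ, x e ≠ n),
          ((if src e = v then ⌊x e⌋ else 0) - (if tgt e = v then ⌊x e⌋ else 0)), ?_⟩
        push_cast
        refine Finset.sum_congr rfl fun e he => ?_
        have := (Finset.mem_filter.1 he).2
        push Not at this
        obtain ⟨k, hk⟩ := this
        rw [hk, Int.floor_intCast]
      obtain ⟨m, hm⟩ := h2
      refine ⟨n - m, ?_⟩
      push_cast
      linarith)
  refine ⟨fun e => if h : e ∈ F then d ⟨e, h⟩ else 0, ?_, ?_, ?_⟩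
  · obtain ⟨e, he⟩ := Function.ne_iff.mp hd0
    refine ⟨e.1, ?_⟩
    simpa using he
  · intro e he
    by_cases h : e ∈ F
    · exact (hmem e).1 h
    · simp [h] at he
  · intro v
    refine Eq.trans ?_ (hd v)
    rw [← Finset.sum_subset (Finset.filter_subset (fun e => ∀ n : ℤ, x e ≠ n) S), ← hF,
      ← Finset.sum_coe_sort]
    · refine Finset.sum_congr rfl fun e _ => ?_
      simp
    · intro e _ he
      rw [← hF] at he
      simp [he]

/-- A sufficiently small step. -/
lemma exists_small_step {E : Type*} (S : Finset E) (x d : E → ℝ)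
    (h : ∀ e ∈ S, 0 ≤ x e ∧ (d e ≠ 0 → 0 < x e)) :
    ∃ ε : ℝ, 0 < ε ∧ ∀ e ∈ S, ε * |d e| ≤ x e := by
  classical
  induction S using Finset.induction_on with
  | empty => exact ⟨1, one_pos, by simp⟩
  | insert a S ha ih =>
    obtain ⟨ε, hε, hS⟩ := ih fun e he => h e (Finset.mem_insert_of_mem he)
    obtain ⟨h0, h1⟩ := h a (Finset.mem_insert_self _ _)
    by_cases hd : d a = 0
    · refine ⟨ε, hε, fun e he => ?_⟩
      rcases Finset.mem_insert.1 he with rfl | he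
      · simpa [hd] using h0
      · exact hS e he
    · have hpos : 0 < |d a| := abs_pos.2 hd
      refine ⟨min ε (x a / |d a|), lt_min hε (div_pos (h1 hd) hpos), fun e he => ?_⟩
      rcases Finset.mem_insert.1 he with rfl | he
      · calc _ ≤ x e / |d e| * |d e| := by gcongr; exact min_le_right _ _
          _ = x e := by field_simp
      · calc _ ≤ ε * |d e| := by gcongr; exact min_le_left _ _
          _ ≤ x e := hS e he

/-- Net flow in the time-expanded graph, where the time-`1` nodes and everything after the
horizon are merged into `none`. -/
lemma net_flow_eq {N : Type*} [Fintype N] [DecidableEq N] (T : ℕ) (τ : N → N → ℕ)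
    (y : N → N → ℕ → ℝ) (i : N) (t : ℕ) (ht1 : 1 < t) (htT : t ≤ T)
    (hτ : ∀ i j, 1 ≤ τ i j) :
    ∑ e ∈ (Finset.univ ×ˢ Finset.univ ×ˢ Finset.Icc 1 T : Finset (N × N × ℕ)),
      ((if (if e.2.2 = 1 then none else some (e.1, e.2.2)) = some (i, t)
          then y e.1 e.2.1 e.2.2 else 0) -
       (if (if e.2.2 + τ e.1 e.2.1 ≤ T then some (e.2.1, e.2.2 + τ e.1 e.2.1) else none)
          = some (i, t) then y e.1 e.2.1 e.2.2 else 0)) =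
    (∑ j, y i j t) - ∑ j, (if τ j i < t then y j i (t - τ j i) else 0) := by
  rw [Finset.sum_sub_distrib]
  congr 1
  · rw [Finset.sum_product, Finset.sum_eq_single i]
    · rw [Finset.sum_product]
      refine Finset.sum_congr rfl fun j _ => ?_
      rw [Finset.sum_eq_single t]
      · have : t ≠ 1 := by omega
        simp [this]
      · intro t' _ hne
        rw [if_neg]
        split_ifs <;> simp [hne]
      · intro h
        exact absurd (Finset.mem_Icc.2 ⟨ht1.le, htT⟩) h
    · intro i' _ hne
      apply Finset.sum_eq_zero
      intro e _
      rw [if_neg]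
      dsimp only
      split_ifs <;> simp [hne]
    · simp
  · rw [Finset.sum_product]
    refine Finset.sum_congr rfl fun j _ => ?_
    rw [Finset.sum_product, Finset.sum_eq_single i]
    · by_cases hlt : τ j i < t
      · rw [if_pos hlt, Finset.sum_eq_single (t - τ j i)]
        · dsimp only
          have h1 : t - τ j i + τ j i = t := by omega
          rw [h1]
          simp [htT]
        · intro t' _ hne
          rw [if_neg]
          dsimp only
          split_ifs
          · simp only [Option.some.injEq, Prod.mk.injEq, true_and]
            omega
          · simp
        · intro h
          exact absurd (Finset.mem_Icc.2 ⟨by omega, by have := hτ j i; omega⟩) h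
      · rw [if_neg hlt]
        apply Finset.sum_eq_zero
        intro t' ht'
        rw [Finset.mem_Icc] at ht'
        rw [if_neg]
        dsimp only
        split_ifs
        · simp only [Option.some.injEq, Prod.mk.injEq, true_and]
          omega
        · simp
    · intro i' _ hne
      apply Finset.sum_eq_zero
      intro e _
      rw [if_neg]
      dsimp only
      split_ifs <;> simp [hne]
    · simp

/-- Perturbing the rebalancing flow along a circulation keeps feasibility. -/
lemma perturb_mem {N : Type*} [Fintype N] (T : ℕ) (τ : N → N → ℕ)
    (hτ : ∀ i j, 1 ≤ τ i j) (lam : N → N → ℕ → ℕ)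
    (p : (N → N → ℕ → ℝ) × (N → N → ℕ → ℝ) × (N → ℕ → ℝ))
    (hp : p ∈ LPFeasibleSet T τ lam) (d : N → N → ℕ → ℝ)
    (hd : ∀ i j t, t ∉ Finset.Icc 1 T → d i j t = 0)
    (hflow : ∀ i t, 1 < t → t ≤ T →
      (∑ j, d i j t) - ∑ j, (if τ j i < t then d j i (t - τ j i) else 0) = 0)
    (hnn : ∀ i j t, 0 ≤ p.2.1 i j t + d i j t) :
    p + ((0 : N → N → ℕ → ℝ), d, fun i t => if t = 1 then ∑ j, d i j 1 else 0) ∈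
      LPFeasibleSet T τ lam := by
  obtain ⟨h1, h2, h3, h4, h5, h6, h7, h8⟩ := hp
  have hcons : ∀ i t, t ∈ Finset.Icc 1 T →
      (∑ j, (p.1 i j t + (p.2.1 i j t + d i j t))) -
        (∑ j, (if τ j i < t then p.1 j i (t - τ j i) +
          (p.2.1 j i (t - τ j i) + d j i (t - τ j i)) else 0))
        = p.2.2 i t + (if t = 1 then ∑ j, d i j 1 else 0) := by
    intro i t ht
    have e1 : ∑ j, (p.1 i j t + (p.2.1 i j t + d i j t)) =
        ∑ j, (p.1 i j t + p.2.1 i j t) + ∑ j, d i j t := by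
      rw [← Finset.sum_add_distrib]
      exact Finset.sum_congr rfl fun j _ => by ring
    have e2 : (∑ j, (if τ j i < t then p.1 j i (t - τ j i) +
          (p.2.1 j i (t - τ j i) + d j i (t - τ j i)) else 0)) =
        (∑ j, (if τ j i < t then p.1 j i (t - τ j i) + p.2.1 j i (t - τ j i) else 0)) +
        ∑ j, (if τ j i < t then d j i (t - τ j i) else 0) := by
      rw [← Finset.sum_add_distrib]
      exact Finset.sum_congr rfl fun j _ => by split_ifs <;> ring
    rw [e1, e2, ← h7 i t ht]
    rw [Finset.mem_Icc] at ht
    by_cases h : t = 1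
    · subst h
      have : ∑ j, (if τ j i < 1 then d j i (1 - τ j i) else 0) = 0 := by
        apply Finset.sum_eq_zero
        intro j _
        rw [if_neg (by have := hτ j i; omega)]
      rw [this]
      simp only [if_true]
      ring
    · have := hflow i t (by omega) ht.2
      rw [if_neg h]
      linarith
  refine ⟨?_, ?_, ?_, ?_, ?_, ?_, ?_, ?_⟩
  · intro i j t
    simpa using h1 i j t
  · intro i j t
    simpa using hnn i j t
  · intro i t
    show 0 ≤ p.2.2 i t + (if t = 1 then ∑ j, d i j 1 else 0)
    by_cases h : t = 1
    · subst h
      by_cases hT : 1 ∈ Finset.Icc 1 T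
      · rw [← hcons i 1 hT]
        have : (∑ j, (if τ j i < 1 then p.1 j i (1 - τ j i) +
          (p.2.1 j i (1 - τ j i) + d j i (1 - τ j i)) else 0)) = 0 := by
          apply Finset.sum_eq_zero
          intro j _
          rw [if_neg (by have := hτ j i; omega)]
        rw [this, sub_zero]
        exact Finset.sum_nonneg fun j _ => add_nonneg (h1 i j 1) (hnn i j 1)
      · simp only [if_true, hd i _ 1 hT, Finset.sum_const_zero, add_zero]
        exact h3 i 1
    · rw [if_neg h, add_zero]
      exact h3 i t
  · intro i j t ht
    have := h4 i j t ht
    constructor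
    · simpa using this.1
    · show p.2.1 i j t + d i j t = 0
      rw [this.2, hd i j t ht, add_zero]
  · intro i t ht
    show p.2.2 i t + (if t = 1 then ∑ j, d i j 1 else 0) = 0
    rw [h5 i t ht]
    by_cases h : t = 1
    · subst h
      simp [hd i _ 1 ht]
    · simp [h]
  · intro i j t ht
    simpa using h6 i j t ht
  · intro i t ht
    simpa using hcons i t ht
  · intro i t ht
    show p.2.2 i t + (if t = 1 then ∑ j, d i j 1 else 0) = 0
    rw [h8 i t ht, if_neg (by omega), add_zero]

/-- **Integrality of extreme points of the LP relaxation.**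
Every extreme point of the LP-relaxation polytope of the offline optimal rebalancing
problem has all coordinates equal to natural numbers. -/
theorem lp_relaxation_extreme_points_integral
    {N : Type*} [Fintype N] [Nonempty N] (T : ℕ) (τ : N → N → ℕ)
    (hτ : ∀ i j, 1 ≤ τ i j) (hτdiag : ∀ i, τ i i = 1)
    (lam : N → N → ℕ → ℕ)
    (p : (N → N → ℕ → ℝ) × (N → N → ℕ → ℝ) × (N → ℕ → ℝ))
    (hp : p ∈ (LPFeasibleSet T τ lam).extremePoints ℝ) :
    (∀ i j t, ∃ n : ℕ, p.1 i j t = (n : ℝ)) ∧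
    (∀ i j t, ∃ n : ℕ, p.2.1 i j t = (n : ℝ)) ∧
    (∀ i t, ∃ n : ℕ, p.2.2 i t = (n : ℝ)) := by
  classical
  obtain ⟨hpF, hext⟩ := hp
  obtain ⟨h1, h2, h3, h4, h5, h6, h7, h8⟩ := id hpF
  have hP : ∀ i j t, ∃ n : ℕ, p.1 i j t = (n : ℝ) := by
    intro i j t
    by_cases ht : t ∈ Finset.Icc 1 T
    · exact ⟨_, h6 i j t ht⟩
    · exact ⟨0, by simpa using (h4 i j t ht).1⟩
  have hRZ : ∀ i j t, ∃ n : ℤ, p.2.1 i j t = (n : ℝ) := by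
    by_contra hcon
    push Not at hcon
    obtain ⟨i0, j0, t0, h0⟩ := hcon
    have ht0 : t0 ∈ Finset.Icc 1 T := by
      by_contra ht
      exact h0 0 (by simpa using (h4 i0 j0 t0 ht).2)
    set S : Finset (N × N × ℕ) := Finset.univ ×ˢ Finset.univ ×ˢ Finset.Icc 1 T with hS
    have hmemS : ∀ e : N × N × ℕ, e ∈ S ↔ e.2.2 ∈ Finset.Icc 1 T := by
      intro e; simp [hS]
    obtain ⟨d, ⟨e1, he1⟩, hsupp, hnet⟩ := exists_circulation S
      (fun e => if e.2.2 = 1 then none else some (e.1, e.2.2))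
      (fun e => if e.2.2 + τ e.1 e.2.1 ≤ T then some (e.2.1, e.2.2 + τ e.1 e.2.1) else none)
      (none : Option (N × ℕ)) (fun e => p.2.1 e.1 e.2.1 e.2.2) (by
        intro v hv
        obtain ⟨⟨i, t⟩, rfl⟩ := Option.ne_none_iff_exists'.mp hv
        by_cases ht : 1 < t ∧ t ≤ T
        · rw [net_flow_eq T τ p.2.1 i t ht.1 ht.2 hτ]
          have hc := h7 i t (Finset.mem_Icc.2 ⟨ht.1.le, ht.2⟩)
          rw [h8 i t ht.1] at hc
          choose f hf using hP
          refine ⟨(∑ j, (if τ j i < t then (f j i (t - τ j i) : ℤ) else 0)) -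
            ∑ j, (f i j t : ℤ), ?_⟩
          push_cast
          simp only [← hf]
          have e2 : (∑ j, (if τ j i < t then p.1 j i (t - τ j i) + p.2.1 j i (t - τ j i) else 0)) =
              (∑ j, (if τ j i < t then p.1 j i (t - τ j i) else 0)) +
              ∑ j, (if τ j i < t then p.2.1 j i (t - τ j i) else 0) := by
            rw [← Finset.sum_add_distrib]
            exact Finset.sum_congr rfl fun j _ => by split_ifs <;> ring
          rw [e2, Finset.sum_add_distrib] at hc
          linarith
        · refine ⟨0, ?_⟩
          rw [Int.cast_zero]
          apply Finset.sum_eq_zero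
          intro e he
          have he' := Finset.mem_Icc.1 ((hmemS e).1 he)
          have := hτ e.1 e.2.1
          rw [if_neg, if_neg, sub_zero]
          · split_ifs
            · simp only [Option.some.injEq, Prod.mk.injEq, not_and]
              intro _ _; omega
            · simp
          · split_ifs
            · simp
            · simp only [Option.some.injEq, Prod.mk.injEq, not_and]
              intro _ _; omega)
      ⟨(i0, j0, t0), (hmemS _).2 ht0, h0⟩
    obtain ⟨ε, hε, hstep⟩ := exists_small_step S (fun e => p.2.1 e.1 e.2.1 e.2.2) d (by
      intro e _
      refine ⟨h2 _ _ _, fun hde => lt_of_le_of_ne (h2 _ _ _) fun h => ?_⟩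
      exact (hsupp e hde).2 0 (by simpa using h.symm))
    have hdS : ∀ i j t, t ∉ Finset.Icc 1 T → d (i, j, t) = 0 := by
      intro i j t ht
      by_contra h
      exact ht ((hmemS _).1 (hsupp _ h).1)
    have hmem : ∀ c : ℝ, |c| = ε →
        p + ((0 : N → N → ℕ → ℝ), (fun i j t => c * d (i, j, t)),
          fun i t => if t = 1 then ∑ j, c * d (i, j, 1) else 0) ∈ LPFeasibleSet T τ lam := by
      intro c hc
      apply perturb_mem T τ hτ lam p hpF
      · intro i j t ht
        rw [hdS i j t ht, mul_zero]
      · intro i t ht1 htT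
        have h := hnet (some (i, t))
        rw [net_flow_eq T τ (fun i j t => d (i, j, t)) i t ht1 htT hτ] at h
        have e2 : (∑ j, (if τ j i < t then c * d (j, i, t - τ j i) else 0)) =
            c * ∑ j, (if τ j i < t then d (j, i, t - τ j i) else 0) := by
          rw [Finset.mul_sum]
          exact Finset.sum_congr rfl fun j _ => by split_ifs <;> ring
        rw [e2, ← Finset.mul_sum, ← mul_sub, h, mul_zero]
      · intro i j t
        by_cases ht : t ∈ Finset.Icc 1 T
        · have h := hstep (i, j, t) ((hmemS _).2 ht)
          dsimp only at h
          rw [← hc, ← abs_mul] at h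
          have := neg_abs_le (c * d (i, j, t))
          linarith
        · rw [hdS i j t ht, mul_zero, add_zero]
          exact h2 i j t
    have hq := hext (hmem ε (abs_of_pos hε)) (hmem (-ε) (by rw [abs_neg, abs_of_pos hε])) (by
      refine ⟨1 / 2, 1 / 2, by norm_num, by norm_num, by norm_num, ?_⟩
      refine Prod.ext ?_ (Prod.ext ?_ ?_)
      · funext i j t
        simp
        ring
      · funext i j t
        simp
        ring
      · funext i t
        simp
        split_ifs <;> ring)
    have hz := congrFun (congrFun (congrFun (congrArg (fun q => q.2.1) hq) e1.1) e1.2.1) e1.2.2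
    have hz' : p.2.1 e1.1 e1.2.1 e1.2.2 + ε * d e1 = p.2.1 e1.1 e1.2.1 e1.2.2 := hz
    have : ε * d e1 = 0 := by linarith
    rcases mul_eq_zero.1 this with h | h
    · exact hε.ne' h
    · exact he1 h
  have hR : ∀ i j t, ∃ n : ℕ, p.2.1 i j t = (n : ℝ) := by
    intro i j t
    obtain ⟨n, hn⟩ := hRZ i j t
    have h := h2 i j t
    rw [hn] at h
    have h' : 0 ≤ n := by exact_mod_cast h
    lift n to ℕ using h'
    exact ⟨n, by simpa using hn⟩
  refine ⟨hP, hR, ?_⟩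
  intro i t
  by_cases ht : t ∈ Finset.Icc 1 T
  · by_cases h : 1 < t
    · exact ⟨0, by simpa using h8 i t h⟩
    · have ht1 : t = 1 := by rw [Finset.mem_Icc] at ht; omega
      subst ht1
      choose f hf using hP
      choose g hg using hR
      refine ⟨∑ j, (f i j 1 + g i j 1), ?_⟩
      rw [← h7 i 1 ht, Finset.sum_eq_zero (f := fun j => if τ j i < 1 then _ else _)]
      · push_cast
        simp only [← hf, ← hg, sub_zero]
      · intro j _
        rw [if_neg (by have := hτ j i; omega)]
  · exact ⟨0, by simpa using h5 i t ht⟩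
end

section
/- The LP relaxation of the offline optimal rebalancing problem has zero integrality gap: for every nonnegative rebalancing cost function c : N × N × {1,…,T} → ℝ (c i j t ≥ 0) and every real-valued nonnegative feasible solution (x^p, x^r, s) of the LP relaxation, there exists an ℕ-valued feasible solution (y^p, y^r, u) of the offline rebalancing problem whose rebalancing cost Σ_{i,j,t} c i j t · y^r i j t is at most Σ_{i,j,t} c i j t · x^r i j t. -/
/-- Real-valued (LP relaxation) feasibility for the offline optimal rebalancing problem:
nonnegative entries, demand satisfaction, vehicle flow conservation (inflow terms whose
departure time would be `< 1` are taken to be `0`), and initial vehicles only at the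
first time interval. -/
def IsFeasibleReal {N : Type*} [Fintype N] (T : ℕ) (τ : N → N → ℕ)
    (lam : N → N → ℕ → ℕ) (xp xr : N → N → ℕ → ℝ) (s : N → ℕ → ℝ) : Prop :=
  (∀ i j t, 0 ≤ xp i j t) ∧ (∀ i j t, 0 ≤ xr i j t) ∧ (∀ i t, 0 ≤ s i t) ∧
  (∀ i j t, t ∈ Finset.Icc 1 T → xp i j t = (lam i j t : ℝ)) ∧
  (∀ i t, t ∈ Finset.Icc 1 T →
    (∑ j, (xp i j t + xr i j t)) -
      (∑ j, (if τ j i < t then xp j i (t - τ j i) + xr j i (t - τ j i) else 0))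
      = s i t) ∧
  (∀ i t, 1 < t → s i t = 0)

/-- A nonzero kernel vector supported on the fractional coordinates. -/
lemma exists_kernel_vec {V E : Type*} [Fintype V] [Fintype E] [DecidableEq V] [DecidableEq E]
    (a : V → E → ℤ) (ha : ∀ v e, a v e = 0 ∨ a v e = 1 ∨ a v e = -1)
    (hcol : ∀ e, ∑ v, a v e = 0)
    (htwo : ∀ e, (Finset.univ.filter (fun v => a v e ≠ 0)).card ≤ 2)
    (f : E → ℝ) (hdiv : ∀ v, ∑ e, (a v e : ℝ) * f e ∈ (Int.castAddHom ℝ).range)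
    (F : Finset E) (hF : ∀ e, e ∈ F ↔ f e ∉ (Int.castAddHom ℝ).range) (hne : F.Nonempty) :
    ∃ d : E → ℝ, d ≠ 0 ∧ (∀ e, e ∉ F → d e = 0) ∧ ∀ v, ∑ e, (a v e : ℝ) * d e = 0 := by
  classical
  set W : Finset V := Finset.univ.filter (fun v => ∃ e ∈ F, a v e ≠ 0) with hW
  have hcard : W.card * 2 ≤ F.card * 2 := by
    refine Finset.card_mul_le_card_mul (fun v e => a v e ≠ 0) ?_ ?_
    · intro v hv
      obtain ⟨e, heF, hae⟩ := (Finset.mem_filter.1 hv).2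
      by_contra hlt
      have hmem : e ∈ F.bipartiteAbove (fun v e => a v e ≠ 0) v := by
        simp [Finset.bipartiteAbove, heF, hae]
      have huniq : ∀ e' ∈ F, a v e' ≠ 0 → e' = e := by
        intro e' he' hae'
        have h1 : (F.bipartiteAbove (fun v e => a v e ≠ 0) v).card ≤ 1 := by omega
        exact Finset.card_le_one.1 h1 e' (by simp [Finset.bipartiteAbove, he', hae']) e hmem
      have hsum := hdiv v
      rw [← Finset.add_sum_erase _ _ (Finset.mem_univ e)] at hsum
      have hrest : ∑ x ∈ Finset.univ.erase e, (a v x : ℝ) * f x ∈ (Int.castAddHom ℝ).range := by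
        refine sum_mem ?_
        intro x hx
        by_cases hxF : x ∈ F
        · have : a v x = 0 := by
            by_contra h0
            exact (Finset.mem_erase.1 hx).1 (huniq x hxF h0)
          rw [this]; simp
        · have := (not_congr (hF x)).1 hxF
          rw [not_not] at this
          obtain ⟨n, hn⟩ := this
          exact ⟨a v x * n, by simp [← hn]⟩
      have he := (add_mem_cancel_right hrest).1 hsum
      refine (hF e).1 heF ?_
      rcases ha v e with h | h | h
      · exact absurd h hae
      · rw [h] at he; simpa only [Int.cast_one, one_mul] using he
      · rw [h] at he
        have := neg_mem he
        simpa only [Int.cast_neg, Int.cast_one, neg_mul, one_mul, neg_neg] using this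
    · intro e _
      refine le_trans (Finset.card_le_card ?_) (htwo e)
      intro v hv
      simp only [Finset.bipartiteBelow, Finset.mem_filter] at hv
      simp [hv.2]
  have hcard' : W.card ≤ F.card := by omega
  let L : (F → ℝ) →ₗ[ℝ] (W → ℝ) :=
    (Matrix.of (fun (v : W) (e : F) => (a v e : ℝ))).mulVecLin
  have hL : ∀ d v, L d v = ∑ e : F, (a v e : ℝ) * d e := by
    intro d v
    simp [L, Matrix.mulVec, dotProduct]
  have hsum0 : ∀ d, ∑ v, L d v = 0 := by
    intro d
    simp_rw [hL]
    rw [Finset.sum_comm]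
    refine Finset.sum_eq_zero ?_
    intro e _
    rw [← Finset.sum_mul]
    have : ∑ v : W, (a v e : ℝ) = 0 := by
      rw [Finset.sum_coe_sort W (fun v => (a v e : ℝ))]
      rw [Finset.sum_subset (Finset.subset_univ W)]
      · exact_mod_cast hcol e
      · intro v _ hv
        by_contra h0
        refine hv (Finset.mem_filter.2 ⟨Finset.mem_univ _, e, e.2, ?_⟩)
        exact_mod_cast h0
    rw [this, zero_mul]
  have hninj : ¬ Function.Injective L := by
    intro hinj
    have h1 := LinearMap.finrank_le_finrank_of_injective hinj
    simp only [Module.finrank_fintype_fun_eq_card, Fintype.card_coe] at h1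
    have h2 : Module.finrank ℝ (F → ℝ) = Module.finrank ℝ (W → ℝ) := by
      simp only [Module.finrank_fintype_fun_eq_card, Fintype.card_coe]; omega
    have hsurj := (LinearMap.injective_iff_surjective_of_finrank_eq_finrank h2).1 hinj
    have hWpos : 0 < W.card := lt_of_lt_of_le hne.card_pos h1
    obtain ⟨w, hw⟩ := Finset.card_pos.1 hWpos
    obtain ⟨d, hd⟩ := hsurj (Pi.single ⟨w, hw⟩ 1)
    have := hsum0 d
    rw [hd] at this
    simp at this
  have : ∃ d, L d = 0 ∧ d ≠ 0 := by
    by_contra hcon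
    push Not at hcon
    exact hninj ((injective_iff_map_eq_zero L).2 hcon)
  obtain ⟨d, hd0, hdne⟩ := this
  refine ⟨fun e => if h : e ∈ F then d ⟨e, h⟩ else 0, ?_, ?_, ?_⟩
  · intro h
    apply hdne
    funext e
    have := congrFun h e
    simpa using this
  · intro e he
    simp [he]
  · intro v
    have hs : ∑ e, (a v e : ℝ) * (if h : e ∈ F then d ⟨e, h⟩ else 0)
        = ∑ e : F, (a v e : ℝ) * d e := by
      rw [← Finset.sum_subset (Finset.subset_univ F), ← Finset.sum_coe_sort F]
      · refine Finset.sum_congr rfl ?_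
        intro e _
        simp
      · intro e _ he
        simp [he]
    rw [hs]
    by_cases hv : v ∈ W
    · rw [← hL d ⟨v, hv⟩, hd0]; rfl
    · refine Finset.sum_eq_zero ?_
      intro e _
      have : a v e = 0 := by
        by_contra h0
        exact hv (Finset.mem_filter.2 ⟨Finset.mem_univ _, e, e.2, h0⟩)
      simp [this]

/-- Integral rounding of a real network flow without increasing the cost. -/
lemma exists_integral_flow {V E : Type*} [Fintype V] [Fintype E] [DecidableEq V] [DecidableEq E]
    (a : V → E → ℤ) (ha : ∀ v e, a v e = 0 ∨ a v e = 1 ∨ a v e = -1)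
    (hcol : ∀ e, ∑ v, a v e = 0)
    (htwo : ∀ e, (Finset.univ.filter (fun v => a v e ≠ 0)).card ≤ 2)
    (f : E → ℝ) (hdiv : ∀ v, ∑ e, (a v e : ℝ) * f e ∈ (Int.castAddHom ℝ).range)
    (c : E → ℝ) :
    ∃ g : E → ℤ, (∀ e, ⌊f e⌋ ≤ g e ∧ g e ≤ ⌈f e⌉) ∧
      (∀ v, ∑ e, (a v e : ℝ) * (g e : ℝ) = ∑ e, (a v e : ℝ) * f e) ∧
      ∑ e, c e * (g e : ℝ) ≤ ∑ e, c e * f e := by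
  classical
  let K : Set (E → ℝ) := Set.Icc (fun e => (⌊f e⌋ : ℝ)) (fun e => (⌈f e⌉ : ℝ)) ∩
    {g | ∀ v, ∑ e, (a v e : ℝ) * g e = ∑ e, (a v e : ℝ) * f e}
  have hKc : IsCompact K := by
    refine isCompact_Icc.inter_right ?_
    rw [Set.ofPred_forall]
    refine isClosed_iInter fun v => isClosed_eq ?_ continuous_const
    fun_prop
  have hfK : f ∈ K :=
    ⟨⟨fun e => Int.floor_le _, fun e => Int.le_ceil _⟩, fun v => rfl⟩
  have hcont : Continuous (fun g : E → ℝ => ∑ e, c e * g e) := by fun_prop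
  obtain ⟨m, hmK, hmin⟩ := hKc.exists_isMinOn ⟨f, hfK⟩ hcont.continuousOn
  let M : Set (E → ℝ) := K ∩ {g | ∑ e, c e * g e ≤ ∑ e, c e * m e}
  have hMc : IsCompact M := hKc.inter_right (isClosed_le hcont continuous_const)
  obtain ⟨x, hx⟩ := hMc.extremePoints_nonempty ⟨m, hmK, le_refl (∑ e, c e * m e)⟩
  obtain ⟨⟨hxK, hxm⟩, hext⟩ := mem_extremePoints.1 hx
  set F : Finset E := Finset.univ.filter (fun e => x e ∉ (Int.castAddHom ℝ).range) with hFdef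
  have hF : ∀ e, e ∈ F ↔ x e ∉ (Int.castAddHom ℝ).range := by intro e; simp [hFdef]
  by_cases hne : F.Nonempty
  · exfalso
    obtain ⟨d, hdne, hdF, hdk⟩ := exists_kernel_vec a ha hcol htwo x
      (fun v => by rw [hxK.2 v]; exact hdiv v) F hF hne
    have hlt : ∀ e ∈ F, (⌊f e⌋ : ℝ) < x e ∧ x e < (⌈f e⌉ : ℝ) := by
      intro e he
      have h := (hF e).1 he
      refine ⟨lt_of_le_of_ne (hxK.1.1 e) ?_, lt_of_le_of_ne (hxK.1.2 e) ?_⟩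
      · intro h'; exact h ⟨_, h'⟩
      · intro h'; exact h ⟨_, h'.symm⟩
    have hev : ∀ᶠ ε : ℝ in nhdsWithin 0 (Set.Ioi 0), ∀ e,
        ((⌊f e⌋ : ℝ) ≤ x e + ε * d e ∧ x e + ε * d e ≤ ⌈f e⌉) ∧
        ((⌊f e⌋ : ℝ) ≤ x e - ε * d e ∧ x e - ε * d e ≤ ⌈f e⌉) := by
      rw [Filter.eventually_all]
      intro e
      by_cases he : e ∈ F
      · apply Filter.Eventually.filter_mono nhdsWithin_le_nhds
        obtain ⟨h1, h2⟩ := hlt e he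
        have t1 : Filter.Tendsto (fun ε : ℝ => x e + ε * d e) (nhds 0) (nhds (x e)) := by
          have : Continuous (fun ε : ℝ => x e + ε * d e) := by fun_prop
          simpa using this.tendsto 0
        have t2 : Filter.Tendsto (fun ε : ℝ => x e - ε * d e) (nhds 0) (nhds (x e)) := by
          have : Continuous (fun ε : ℝ => x e - ε * d e) := by fun_prop
          simpa using this.tendsto 0
        filter_upwards [t1.eventually_const_lt h1, t1.eventually_lt_const h2,
          t2.eventually_const_lt h1, t2.eventually_lt_const h2] with ε q1 q2 q3 q4
        exact ⟨⟨q1.le, q2.le⟩, q3.le, q4.le⟩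
      · refine Filter.Eventually.of_forall fun ε => ?_
        rw [hdF e he]
        simpa using ⟨hxK.1.1 e, hxK.1.2 e⟩
    obtain ⟨ε, hε, hε0⟩ := (hev.and self_mem_nhdsWithin).exists
    have hε0 : 0 < ε := hε0
    have hp : (fun e => x e + ε * d e) ∈ K := by
      refine ⟨⟨fun e => (hε e).1.1, fun e => (hε e).1.2⟩, fun v => ?_⟩
      have : ∑ e, (a v e : ℝ) * (x e + ε * d e)
          = ∑ e, (a v e : ℝ) * x e + ε * ∑ e, (a v e : ℝ) * d e := by
        rw [Finset.mul_sum, ← Finset.sum_add_distrib]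
        exact Finset.sum_congr rfl fun e _ => by ring
      rw [this, hdk v, hxK.2 v]; simp
    have hq : (fun e => x e - ε * d e) ∈ K := by
      refine ⟨⟨fun e => (hε e).2.1, fun e => (hε e).2.2⟩, fun v => ?_⟩
      have : ∑ e, (a v e : ℝ) * (x e - ε * d e)
          = ∑ e, (a v e : ℝ) * x e - ε * ∑ e, (a v e : ℝ) * d e := by
        rw [Finset.mul_sum, ← Finset.sum_sub_distrib]
        exact Finset.sum_congr rfl fun e _ => by ring
      rw [this, hdk v, hxK.2 v]; simp
    have cp : ∑ e, c e * (x e + ε * d e) = ∑ e, c e * x e + ε * ∑ e, c e * d e := by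
      rw [Finset.mul_sum, ← Finset.sum_add_distrib]
      exact Finset.sum_congr rfl fun e _ => by ring
    have cq : ∑ e, c e * (x e - ε * d e) = ∑ e, c e * x e - ε * ∑ e, c e * d e := by
      rw [Finset.mul_sum, ← Finset.sum_sub_distrib]
      exact Finset.sum_congr rfl fun e _ => by ring
    have mp : ∑ e, c e * m e ≤ ∑ e, c e * (x e + ε * d e) := hmin hp
    have mq : ∑ e, c e * m e ≤ ∑ e, c e * (x e - ε * d e) := hmin hq
    have hxm' : ∑ e, c e * x e ≤ ∑ e, c e * m e := hxm
    have hpM : (fun e => x e + ε * d e) ∈ M := ⟨hp, by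
      change ∑ e, c e * (x e + ε * d e) ≤ _; linarith⟩
    have hqM : (fun e => x e - ε * d e) ∈ M := ⟨hq, by
      change ∑ e, c e * (x e - ε * d e) ≤ _; linarith⟩
    have hseg : x ∈ openSegment ℝ (fun e => x e + ε * d e) (fun e => x e - ε * d e) := by
      refine ⟨1/2, 1/2, by norm_num, by norm_num, by norm_num, ?_⟩
      funext e
      simp only [Pi.add_apply, Pi.smul_apply, smul_eq_mul]
      ring
    have := (hext _ hpM _ hqM hseg).1
    apply hdne
    funext e
    have h := congrFun this e
    simp only [add_eq_left, mul_eq_zero] at h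
    rcases h with h | h
    · exact absurd h hε0.ne'
    · exact h
  · have hint : ∀ e, ∃ n : ℤ, (n : ℝ) = x e := by
      intro e
      by_contra hcon
      exact hne ⟨e, (hF e).2 fun ⟨n, hn⟩ => hcon ⟨n, hn⟩⟩
    choose g hg using hint
    refine ⟨g, fun e => ⟨?_, ?_⟩, fun v => ?_, ?_⟩
    · have := hxK.1.1 e
      simp only [← hg e] at this
      exact_mod_cast this
    · have := hxK.1.2 e
      simp only [← hg e] at this
      exact_mod_cast this
    · simp_rw [hg]; exact hxK.2 v
    · simp_rw [hg]
      exact le_trans hxm (hmin hfK)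

/-- Tail of an arc in the time-expanded network (`none` is the ground node). -/
def arcSrc {N : Type*} (T : ℕ) :
    (N × N × Finset.Icc 1 T) ⊕ (N × Finset.Icc 1 T) → Option (N × Finset.Icc 1 T)
  | Sum.inl (i, _, t) => some (i, t)
  | Sum.inr _ => none

/-- Head of an arc in the time-expanded network. -/
def arcDst {N : Type*} (T : ℕ) (τ : N → N → ℕ) :
    (N × N × Finset.Icc 1 T) ⊕ (N × Finset.Icc 1 T) → Option (N × Finset.Icc 1 T)
  | Sum.inl (i, j, t) =>
      if h : (t : ℕ) + τ i j ∈ Finset.Icc 1 T then some (j, ⟨_, h⟩) else none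
  | Sum.inr p => some p

/-- The flow on arcs built from rebalancing flows and initial vehicles. -/
def arcFlow {N : Type*} (T : ℕ) (xr : N → N → ℕ → ℝ) (s : N → ℕ → ℝ) :
    (N × N × Finset.Icc 1 T) ⊕ (N × Finset.Icc 1 T) → ℝ
  | Sum.inl (i, j, t) => xr i j t
  | Sum.inr (i, t) => s i t

lemma arc_div {N : Type*} [Fintype N] [DecidableEq N] (T : ℕ) (τ : N → N → ℕ)
    (hτ : ∀ i j, 1 ≤ τ i j)
    (xr : N → N → ℕ → ℝ) (s : N → ℕ → ℝ) (i : N) (t : Finset.Icc 1 T) :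
    ∑ e, ((((if arcSrc T e = some (i, t) then 1 else 0)
        - (if arcDst T τ e = some (i, t) then 1 else 0) : ℤ)) : ℝ) * arcFlow T xr s e
      = ∑ j, xr i j t - ∑ j, (if τ j i < (t : ℕ) then xr j i (t - τ j i) else 0) - s i t := by
  have h1 : ∀ i' j' : N, ∀ t' : Finset.Icc 1 T,
      (arcDst T τ (Sum.inl (i', j', t')) = some (i, t)) ↔ (j' = i ∧ (t' : ℕ) + τ i' j' = t) := by
    intro i' j' t'
    have ht := Finset.mem_Icc.1 t.2
    simp only [arcDst]
    split_ifs with h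
    · simp [Subtype.ext_iff]
    · simp only [reduceCtorEq, false_iff, not_and]
      intro _ h'
      exact h (h' ▸ t.2)
  have hA : ∑ e : N × N × Finset.Icc 1 T,
      (if arcSrc T (Sum.inl e) = some (i, t) then arcFlow T xr s (Sum.inl e) else 0)
      = ∑ j, xr i j t := by
    rw [Fintype.sum_prod_type, Finset.sum_eq_single i]
    · rw [Fintype.sum_prod_type]
      refine Finset.sum_congr rfl fun j _ => ?_
      simp [arcSrc, arcFlow]
    · intro b _ hb
      simp [arcSrc, hb]
    · simp
  have hB : ∑ e : N × N × Finset.Icc 1 T,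
      (if arcDst T τ (Sum.inl e) = some (i, t) then arcFlow T xr s (Sum.inl e) else 0)
      = ∑ j, (if τ j i < (t : ℕ) then xr j i (t - τ j i) else 0) := by
    rw [Fintype.sum_prod_type]
    refine Finset.sum_congr rfl fun j _ => ?_
    rw [Fintype.sum_prod_type, Finset.sum_eq_single i]
    · simp only [h1, true_and, arcFlow]
      have ht := Finset.mem_Icc.1 t.2
      have hj := hτ j i
      split_ifs with h
      · rw [Finset.sum_eq_single ⟨(t : ℕ) - τ j i, Finset.mem_Icc.2 (by omega)⟩]
        · simp only []
          rw [if_pos (by omega)]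
        · intro b _ hb
          rw [if_neg]
          intro h'
          apply hb
          apply Subtype.ext
          simp only []
          omega
        · simp
      · refine Finset.sum_eq_zero fun b _ => ?_
        rw [if_neg]
        have := Finset.mem_Icc.1 b.2
        omega
    · intro b _ hb
      simp [h1, hb]
    · simp
  rw [Fintype.sum_sum_type, ← hA, ← hB, ← Finset.sum_sub_distrib, sub_eq_add_neg]
  congr 1
  · refine Finset.sum_congr rfl fun e _ => ?_
    push_cast
    rw [sub_mul, ite_mul, ite_mul]
    simp
  · simp only [arcSrc, arcDst, arcFlow]
    rw [Finset.sum_eq_single (i, t)]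
    · simp
    · intro b _ hb
      simp [hb]
    · simp

/-- **Zero integrality gap of the LP relaxation.**
For every nonnegative rebalancing cost `c` and every real-valued feasible solution of the
LP relaxation, there is an ℕ-valued feasible solution whose rebalancing cost is no larger. -/
theorem lp_relaxation_zero_integrality_gap
    {N : Type*} [Fintype N] [Nonempty N] (T : ℕ) (τ : N → N → ℕ)
    (hτ : ∀ i j, 1 ≤ τ i j) (hτdiag : ∀ i, τ i i = 1)
    (lam : N → N → ℕ → ℕ)
    (c : N → N → ℕ → ℝ) (hc : ∀ i j t, 0 ≤ c i j t)
    (xp xr : N → N → ℕ → ℝ) (s : N → ℕ → ℝ)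
    (hfeas : IsFeasibleReal T τ lam xp xr s) :
    ∃ (yp yr : N → N → ℕ → ℕ) (u : N → ℕ → ℕ),
      IsFeasible T τ lam yp yr u ∧
      (∑ i, ∑ j, ∑ t ∈ Finset.Icc 1 T, c i j t * (yr i j t : ℝ))
        ≤ ∑ i, ∑ j, ∑ t ∈ Finset.Icc 1 T, c i j t * xr i j t := by
  classical
  obtain ⟨-, hxr, hs, hlam, hflow, hs0⟩ := hfeas
  let a : Option (N × Finset.Icc 1 T) → ((N × N × Finset.Icc 1 T) ⊕ (N × Finset.Icc 1 T)) → ℤ :=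
    fun v e => (if arcSrc T e = v then 1 else 0) - (if arcDst T τ e = v then 1 else 0)
  have ha : ∀ v e, a v e = 0 ∨ a v e = 1 ∨ a v e = -1 := by
    intro v e
    simp only [a]
    split_ifs <;> simp
  have hcol : ∀ e, ∑ v, a v e = 0 := by
    intro e
    simp [a, Finset.sum_sub_distrib]
  have htwo : ∀ e, (Finset.univ.filter (fun v => a v e ≠ 0)).card ≤ 2 := by
    intro e
    refine le_trans (Finset.card_le_card (t := {arcSrc T e, arcDst T τ e}) ?_) Finset.card_le_two
    intro v hv
    have hv := (Finset.mem_filter.1 hv).2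
    rw [Finset.mem_insert, Finset.mem_singleton]
    by_contra hcon
    push Not at hcon
    apply hv
    simp [a, hcon.1.symm, hcon.2.symm]
  have hin : ∀ (z : N → N → ℕ → ℝ) i t, ∑ j, (if τ j i < t then (lam j i (t - τ j i) : ℝ)
      + z j i (t - τ j i) else 0) = ((∑ j, (if τ j i < t then lam j i (t - τ j i) else 0) : ℕ) : ℝ)
      + ∑ j, (if τ j i < t then z j i (t - τ j i) else 0) := by
    intro z i t
    push_cast
    rw [← Finset.sum_add_distrib]
    refine Finset.sum_congr rfl fun j _ => ?_
    split_ifs <;> simp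
  have hbal : ∀ i (t : Finset.Icc 1 T),
      ∑ j, xr i j t - ∑ j, (if τ j i < (t : ℕ) then xr j i (t - τ j i) else 0) - s i t
      = ((∑ j, (if τ j i < (t : ℕ) then lam j i (t - τ j i) else 0) : ℕ) : ℝ)
        - ((∑ j, lam i j t : ℕ) : ℝ) := by
    intro i t
    have h := hflow i t t.2
    have e1 : ∑ j, (if τ j i < (t : ℕ) then xp j i (t - τ j i) + xr j i (t - τ j i) else 0)
        = ∑ j, (if τ j i < (t : ℕ) then (lam j i (t - τ j i) : ℝ) + xr j i (t - τ j i) else 0) := by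
      refine Finset.sum_congr rfl fun j _ => ?_
      have ht := Finset.mem_Icc.1 t.2
      split_ifs with hlt
      · rw [hlam j i _ (Finset.mem_Icc.2 (by omega))]
      · rfl
    rw [e1, hin, Finset.sum_add_distrib, Finset.sum_congr rfl fun j _ => hlam i j t t.2] at h
    push_cast at h ⊢
    linarith
  have hdiv' : ∀ p : N × Finset.Icc 1 T,
      ∑ e, (a (some p) e : ℝ) * arcFlow T xr s e ∈ (Int.castAddHom ℝ).range := by
    rintro ⟨i, t⟩
    have := arc_div T τ hτ xr s i t
    rw [hbal] at this
    simp only [a]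
    rw [this]
    exact ⟨((∑ j, (if τ j i < (t : ℕ) then lam j i (t - τ j i) else 0) : ℕ) : ℤ)
        - ((∑ j, lam i j t : ℕ) : ℤ), by simp⟩
  have hdiv : ∀ v, ∑ e, (a v e : ℝ) * arcFlow T xr s e ∈ (Int.castAddHom ℝ).range := by
    rintro (_ | p)
    · have htot : ∑ v, ∑ e, (a v e : ℝ) * arcFlow T xr s e = 0 := by
        rw [Finset.sum_comm]
        refine Finset.sum_eq_zero fun e _ => ?_
        rw [← Finset.sum_mul]
        have : ∑ v, (a v e : ℝ) = 0 := by exact_mod_cast hcol e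
        rw [this, zero_mul]
      rw [Fintype.sum_option] at htot
      rw [eq_neg_of_add_eq_zero_left htot]
      exact neg_mem (sum_mem fun p _ => hdiv' p)
    · exact hdiv' p
  let cost : (N × N × Finset.Icc 1 T) ⊕ (N × Finset.Icc 1 T) → ℝ :=
    fun e => arcFlow T c (fun _ _ => 0) e
  obtain ⟨g, hgb, hgd, hgc⟩ := exists_integral_flow a ha hcol htwo (arcFlow T xr s) hdiv cost
  have hf0 : ∀ e, 0 ≤ arcFlow T xr s e := by
    rintro (⟨i, j, t⟩ | ⟨i, t⟩)
    · exact hxr _ _ _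
    · exact hs _ _
  have hg0 : ∀ e, 0 ≤ g e := fun e => le_trans (Int.floor_nonneg.2 (hf0 e)) (hgb e).1
  let yr : N → N → ℕ → ℕ := fun i j t =>
    if h : t ∈ Finset.Icc 1 T then (g (Sum.inl (i, j, ⟨t, h⟩))).toNat else 0
  let u : N → ℕ → ℕ := fun i t =>
    if h : t ∈ Finset.Icc 1 T then (g (Sum.inr (i, ⟨t, h⟩))).toNat else 0
  have hgflow : ∀ e, arcFlow T (fun i j t => (yr i j t : ℝ)) (fun i t => (u i t : ℝ)) e
      = (g e : ℝ) := by
    have key : ∀ e, (((g e).toNat : ℕ) : ℝ) = (g e : ℝ) := by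
      intro e
      exact_mod_cast Int.toNat_of_nonneg (hg0 e)
    rintro (⟨i, j, t⟩ | ⟨i, t⟩)
    · simp only [arcFlow, yr]
      rw [dif_pos t.2]
      exact key _
    · simp only [arcFlow, u]
      rw [dif_pos t.2]
      exact key _
  have hcost : ∀ z w, ∑ e, cost e * arcFlow T z w e
      = ∑ i, ∑ j, ∑ t ∈ Finset.Icc 1 T, c i j t * z i j t := by
    intro z w
    rw [Fintype.sum_sum_type]
    simp only [cost, arcFlow, zero_mul, Finset.sum_const_zero, add_zero]
    rw [Fintype.sum_prod_type]
    refine Finset.sum_congr rfl fun i _ => ?_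
    rw [Fintype.sum_prod_type]
    refine Finset.sum_congr rfl fun j _ => ?_
    exact Finset.sum_coe_sort (Finset.Icc 1 T) (fun t => c i j t * z i j t)
  refine ⟨lam, yr, u, ⟨fun _ _ _ _ => rfl, ?_, ?_⟩, ?_⟩
  · intro i t ht
    have h := hgd (some (i, ⟨t, ht⟩))
    simp_rw [← hgflow] at h
    have h1 := arc_div T τ hτ xr s i ⟨t, ht⟩
    have h2 := arc_div T τ hτ (fun i j t => (yr i j t : ℝ)) (fun i t => (u i t : ℝ)) i ⟨t, ht⟩
    have h3 := (h2.symm.trans h).trans (h1.trans (hbal i ⟨t, ht⟩))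
    have h4 := hin (fun i j t => (yr i j t : ℝ)) i t
    simp only [] at h3 h4
    have : ((∑ j, (lam i j t + yr i j t) : ℕ) : ℝ) = ((u i t + ∑ j, (if τ j i < t then
        lam j i (t - τ j i) + yr j i (t - τ j i) else 0) : ℕ) : ℝ) := by
      rw [Finset.sum_add_distrib]
      push_cast at h3 h4 ⊢
      rw [h4]
      linarith
    exact_mod_cast this
  · intro i t ht
    simp only [u]
    split_ifs with h
    · have := (hgb (Sum.inr (i, ⟨t, h⟩))).2
      simp only [arcFlow, hs0 i t ht, Int.ceil_zero] at this
      omega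
    · rfl
  · simp_rw [← hgflow] at hgc
    rw [hcost, hcost] at hgc
    exact hgc
end

section
/- If T ≥ 1 and at the first time interval every region has at least as many available vehicles as outstanding customers originating there, i.e. s i 1 ≥ Σ_{j∈N} λ0 i j for all i ∈ N, then the MPC rebalancing problem is feasible: there exist ℕ-valued x^p, x^r, w, d satisfying the relaxed demand constraint, the vehicle flow-conservation constraint, and the constraint that all outstanding customers are served within the planning horizon (in particular, all outstanding customers can be picked up at time t = 1). -/
/-- Feasibility for the MPC rebalancing problem with vehicle availability schedule `s`,
outstanding demand `lam0`, and predicted demand `lamhat`: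
(a) relaxed demand satisfaction `x^p + d = λ̂ + w`,
(b) vehicle flow conservation (stated in ℕ as `Σ out = s i t + Σ in`, with inflow terms
whose departure time would be `< 1` taken to be `0`),
(c) all outstanding customers are served within the planning horizon. -/
def MPCFeasible {N : Type*} [Fintype N] (T : ℕ) (τ : N → N → ℕ)
    (s : N → ℕ → ℕ) (lam0 : N → N → ℕ) (lamhat : N → N → ℕ → ℕ)
    (xp xr w d : N → N → ℕ → ℕ) : Prop :=
  (∀ i j t, t ∈ Finset.Icc 1 T → xp i j t + d i j t = lamhat i j t + w i j t) ∧
  (∀ i t, t ∈ Finset.Icc 1 T →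
    (∑ j, (xp i j t + xr i j t)) =
      s i t + ∑ j, (if τ j i < t then xp j i (t - τ j i) + xr j i (t - τ j i) else 0)) ∧
  (∀ i j, (∑ t ∈ Finset.Icc 1 T, w i j t) = lam0 i j)

/-- **Feasibility of the MPC problem with sufficient initial availability.**
If `T ≥ 1` and at the first time interval every region has at least as many available
vehicles as outstanding customers originating there, then the MPC rebalancing problem
is feasible; in particular all outstanding customers can be picked up at time `t = 1`. -/
theorem mpc_feasible_of_sufficient_initial_vehicles
    {N : Type*} [Fintype N] [Nonempty N] (T : ℕ) (τ : N → N → ℕ)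
    (hτ : ∀ i j, 1 ≤ τ i j) (hτdiag : ∀ i, τ i i = 1)
    (s : N → ℕ → ℕ) (lam0 : N → N → ℕ) (lamhat : N → N → ℕ → ℕ)
    (hT : 1 ≤ T) (hs : ∀ i, (∑ j, lam0 i j) ≤ s i 1) :
    ∃ xp xr w d : N → N → ℕ → ℕ,
      MPCFeasible T τ s lam0 lamhat xp xr w d ∧
      (∀ i j, w i j 1 = lam0 i j) := by
  classical
  let w : N → N → ℕ → ℕ := fun i j t => if t = 1 then lam0 i j else 0
  let inn : N → ℕ → ℕ := fun i t => ∑ j, (if τ j i < t then w j i (t - τ j i) else 0)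
  -- number of vehicles idling at `i` during step `t`
  let y : N → ℕ → ℕ := fun i t =>
    Nat.rec 0 (fun t r => s i (t + 1) + inn i (t + 1) + r - ∑ j, w i j (t + 1)) t
  have y0 : ∀ i, y i 0 = 0 := fun i => rfl
  have ysucc : ∀ i t, y i (t + 1) + ∑ j, w i j (t + 1) = s i (t + 1) + inn i (t + 1) + y i t := by
    intro i t
    have h : ∑ j, w i j (t + 1) ≤ s i (t + 1) := by
      rcases t with _ | t
      · simpa [w] using hs i
      · simp [w]
    have e : y i (t + 1) = s i (t + 1) + inn i (t + 1) + y i t - ∑ j, w i j (t + 1) := rfl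
    omega
  refine ⟨w, fun i j t => if i = j then y i t else 0, w, lamhat, ⟨?_, ?_, ?_⟩, ?_⟩
  · intro i j t _
    exact Nat.add_comm _ _
  · intro i t ht
    obtain ⟨t, rfl⟩ : ∃ u, t = u + 1 := ⟨t - 1, by have := (Finset.mem_Icc.mp ht).1; omega⟩
    have h1 : ∑ j, (if τ j i < t + 1 then
        w j i (t + 1 - τ j i) + (if j = i then y j (t + 1 - τ j i) else 0) else 0)
        = inn i (t + 1) + y i t := by
      have h2 : ∀ j, (if τ j i < t + 1 then
          w j i (t + 1 - τ j i) + (if j = i then y j (t + 1 - τ j i) else 0) else 0)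
          = (if τ j i < t + 1 then w j i (t + 1 - τ j i) else 0)
            + (if j = i then y i t else 0) := by
        intro j
        by_cases hj : j = i
        · subst hj
          rw [hτdiag]
          rcases t with _ | t
          · simp [y0]
          · simp
        · simp [hj]
      rw [Finset.sum_congr rfl (fun j _ => h2 j), Finset.sum_add_distrib]
      simp [inn]
    have h3 := ysucc i t
    rw [h1, Finset.sum_add_distrib, Finset.sum_ite_eq]
    simp only [Finset.mem_univ, if_true]
    omega
  · intro i j
    simp [w, hT]
  · intro i j
    simp [w]
end
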